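/- Fix t > 0 and set Φ_t(z) = z·exp(t(1+z)/(2−2z)) for z in the open unit disc 𝔻. For each n, let α_n ∈ ℂ with |α_n| = 1 and let σ_n be a finite Borel measure on the unit circle 𝕋; set Φ_n(z) = α_n z·exp(∫_𝕋 (1+ξz)/(1−ξz) dσ_n(ξ)) for z ∈ 𝔻, and let ω_n : 𝔻̄ → 𝔻̄ be continuous and one-to-one on 𝔻̄, with ω_n(𝔻) ⊆ 𝔻, ω_n analytic in 𝔻, and Φ_n(ω_n(z)) = z for all z ∈ 𝔻. Assume Φ_n → Φ_t uniformly on every compact subset of 𝔻 as n → ∞. Then there exist N ≥ 1 and a constant C ∈ (0,1) such that for all n ≥ N and all z ∈ 𝔻̄ with z ≠ 0, the quotient w = ω_n(z)/z satisfies C ≤ |w| ≤ 1 and |arg w| ≤ 2, where arg is the principal argument; in particular ω_n(z)/z avoids the interval (−∞,0]. -/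

import Mathlib

open MeasureTheory Complex Set Metric Filter

/-- The free Lévy–Hinčin form `Φ(z) = α z exp(∫_𝕋 (1+ξz)/(1−ξz) dσ(ξ))`. -/
noncomputable def PhiLH (α : ℂ) (σ : Measure ℂ) (z : ℂ) : ℂ :=
  α * z * Complex.exp (∫ ξ, (1 + ξ * z) / (1 - ξ * z) ∂σ)

/-!
Write `Φ(z) = α z exp (H z)` with `H` the Herglotz transform of `σ`, and put `w = ω(z)`. Then
`w / z = α⁻¹ exp (-H w)`, so everything reduces to bounding `H w`. Since `|Φ(w)| < 1`, the real
part of `H w` is at most `-log r` with `r = |w|`. On the circle `|u| = r` the imaginary part of the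
kernel `(1 + u) / (1 - u)` is at most `2r / (1 - r²)` times its real part, so the imaginary part of
`H w` is at most `2r / (1 - r²) * (-log r) ≤ 1`; and by Harnack's inequality the real part can only
be large through a large mass `σ(𝕋)`. Finally `Φ'(0) = α exp (σ(𝕋))`, so convergence of `Φ_n'(0)` to
a positive number forces `arg α_n → 0` and keeps the masses bounded.
-/

section Argument

open InnerProductGeometry

lemma abs_arg_mul_le (z w : ℂ) : |(z * w).arg| ≤ |z.arg| + |w.arg| := by
  rcases eq_or_ne z 0 with rfl | hz
  · simp
  rcases eq_or_ne w 0 with rfl | hw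
  · simp
  calc |(z * w).arg| = angle z w⁻¹ := by
        rw [angle_eq_abs_arg hz (inv_ne_zero hw), div_inv_eq_mul]
    _ ≤ angle z 1 + angle 1 w⁻¹ := angle_le_angle_add_angle z 1 w⁻¹
    _ = |z.arg| + |w.arg| := by
        rw [angle_one_right hz, angle_one_left (inv_ne_zero hw), abs_arg_inv]

lemma abs_arg_exp_le (z : ℂ) : |(exp z).arg| ≤ |z.im| := by
  rcases le_or_gt |z.im| Real.pi with h | h
  · rcases (abs_le.1 h).1.eq_or_lt with h_eq | h_lt
    · rw [← h_eq, abs_neg, abs_of_pos Real.pi_pos]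
      exact abs_arg_le_pi _
    · rw [arg_exp, (toIocMod_eq_self _).2 ⟨h_lt, by linarith [(abs_le.1 h).2]⟩]
  · exact (abs_arg_le_pi _).trans h.le

lemma continuousAt_abs_arg {z : ℂ} (hz : z ≠ 0) : ContinuousAt (fun w : ℂ => |w.arg|) z := by
  have h_angle : ContinuousAt (fun w : ℂ => angle w 1) z :=
    (continuousAt_angle (x := (z, (1 : ℂ))) hz one_ne_zero).comp
      (f := fun w : ℂ => (w, (1 : ℂ))) (by fun_prop)
  refine h_angle.congr ?_
  filter_upwards [isOpen_ne.mem_nhds hz] with w hw using angle_one_right hw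

end Argument

/-- The closed annular sector of the `w ∈ ℂ` with `C ≤ |w| ≤ 1` and `|arg w| ≤ θ`, the region which
traps the quotients `ω(z) / z`. -/
def annularSector (C θ : ℝ) : Set ℂ :=
  {w | C ≤ ‖w‖ ∧ ‖w‖ ≤ 1 ∧ |w.arg| ≤ θ}

lemma annularSector_subset_annularSector {C C' θ θ' : ℝ} (hC : C ≤ C') (hθ : θ' ≤ θ) :
    annularSector C' θ' ⊆ annularSector C θ :=
  fun _ hw => ⟨hC.trans hw.1, hw.2.1, hw.2.2.trans hθ⟩

lemma isClosed_annularSector {C : ℝ} (hC : 0 < C) (θ : ℝ) : IsClosed (annularSector C θ) := by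
  have h_annulus : IsClosed {w : ℂ | C ≤ ‖w‖ ∧ ‖w‖ ≤ 1} :=
    (isClosed_le continuous_const continuous_norm).inter
      (isClosed_le continuous_norm continuous_const)
  have h_arg : ContinuousOn (fun w : ℂ => |w.arg|) {w : ℂ | C ≤ ‖w‖ ∧ ‖w‖ ≤ 1} := fun w hw =>
    (continuousAt_abs_arg (norm_pos_iff.1 (hC.trans_le hw.1))).continuousWithinAt
  convert! h_arg.preimage_isClosed_of_isClosed h_annulus (isClosed_Iic (a := θ)) using 1
  ext w
  simp only [annularSector, mem_ofPred_eq, mem_inter_iff, mem_preimage, mem_Iic, and_assoc]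

lemma mapsTo_closure_inter_of_continuousOn {X Y : Type*} [TopologicalSpace X] [TopologicalSpace Y]
    {f : X → Y} {U V : Set X} {S : Set Y} (hV : IsOpen V) (hS : IsClosed S)
    (hf : ContinuousOn f (closure U ∩ V)) (hmaps : MapsTo f (U ∩ V) S) :
    MapsTo f (closure U ∩ V) S := by
  intro x hx
  have hx_closure : x ∈ closure (U ∩ V) := hV.closure_inter hx
  have hf_within : ContinuousWithinAt f (U ∩ V) x :=
    (hf x hx).mono (inter_subset_inter_left V subset_closure)
  exact hS.closure_eq ▸ hf_within.mem_closure hx_closure hmaps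

section HerglotzKernel

variable {u : ℂ}

lemma re_one_add_div_one_sub (u : ℂ) :
    ((1 + u) / (1 - u)).re = (1 - ‖u‖ ^ 2) / ‖1 - u‖ ^ 2 := by
  simpa [poissonKernel, herglotzRieszKernel] using
    (congrFun (poissonKernel_eq_re_herglotzRieszKernel (c := 0) (w := u)) 1).symm

lemma im_one_add_div_one_sub (u : ℂ) :
    ((1 + u) / (1 - u)).im = 2 * u.im / ‖1 - u‖ ^ 2 := by
  rw [div_im, ← normSq_eq_norm_sq, ← sub_div]
  congr 1
  simp only [add_re, add_im, sub_re, sub_im, one_re, one_im]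
  ring

lemma re_one_add_div_one_sub_nonneg (hu : ‖u‖ ≤ 1) : 0 ≤ ((1 + u) / (1 - u)).re := by
  rw [re_one_add_div_one_sub]
  have : 0 ≤ 1 - ‖u‖ ^ 2 := sub_nonneg.2 (pow_le_one₀ (norm_nonneg u) hu)
  positivity

lemma re_one_add_div_one_sub_le (hu : ‖u‖ < 1) :
    ((1 + u) / (1 - u)).re ≤ (1 + ‖u‖) / (1 - ‖u‖) := by
  simpa using re_herglotzRieszKernel_le (c := 0) (z := 1) (w := u) (R := 1) (by simp) (by simpa)

lemma abs_im_one_add_div_one_sub_le (hu : ‖u‖ < 1) :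
    |((1 + u) / (1 - u)).im| ≤ 2 * ‖u‖ / (1 - ‖u‖ ^ 2) * ((1 + u) / (1 - u)).re := by
  have h_pos : 0 < 1 - ‖u‖ ^ 2 := sub_pos.2 (pow_lt_one₀ (norm_nonneg u) hu two_ne_zero)
  calc |((1 + u) / (1 - u)).im| = 2 * |u.im| / ‖1 - u‖ ^ 2 := by
        rw [im_one_add_div_one_sub, abs_div, abs_mul, abs_two, abs_of_nonneg (sq_nonneg ‖1 - u‖)]
    _ ≤ 2 * ‖u‖ / ‖1 - u‖ ^ 2 := by gcongr; exact abs_im_le_norm u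
    _ = 2 * ‖u‖ / (1 - ‖u‖ ^ 2) * ((1 + u) / (1 - u)).re := by
        rw [re_one_add_div_one_sub, div_mul_div_cancel₀ h_pos.ne']

end HerglotzKernel

/-- The Herglotz transform `z ↦ ∫ (1 + ξz) / (1 - ξz) dσ(ξ)`, the exponent of `PhiLH`. As in
`PhiLH`, a measure on the circle is a measure on `ℂ` which gives mass zero to the complement. -/
noncomputable def herglotzTransform (σ : Measure ℂ) (z : ℂ) : ℂ :=
  ∫ ξ, (1 + ξ * z) / (1 - ξ * z) ∂σ

lemma PhiLH_eq_mul_exp (α : ℂ) (σ : Measure ℂ) (z : ℂ) :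
    PhiLH α σ z = z * (α * exp (herglotzTransform σ z)) := by
  rw [PhiLH, herglotzTransform]
  ring

lemma herglotzTransform_zero (σ : Measure ℂ) : herglotzTransform σ 0 = σ.real univ := by
  simp [herglotzTransform]

section HerglotzTransform

variable {σ : Measure ℂ} {z : ℂ}

lemma ae_norm_eq_one (hσ : σ (sphere (0 : ℂ) 1)ᶜ = 0) : ∀ᵐ ξ ∂σ, ‖ξ‖ = 1 := by
  have h_sphere : ∀ᵐ ξ ∂σ, ξ ∈ sphere (0 : ℂ) 1 := hσ
  filter_upwards [h_sphere] with ξ hξ using mem_sphere_zero_iff_norm.1 hξ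

lemma ae_norm_mul_eq (hσ : σ (sphere (0 : ℂ) 1)ᶜ = 0) (z : ℂ) : ∀ᵐ ξ ∂σ, ‖ξ * z‖ = ‖z‖ := by
  filter_upwards [ae_norm_eq_one hσ] with ξ hξ
  rw [norm_mul, hξ, one_mul]

variable [IsFiniteMeasure σ]

lemma integrable_herglotzKernel (hσ : σ (sphere (0 : ℂ) 1)ᶜ = 0) (hz : ‖z‖ < 1) :
    Integrable (fun ξ => (1 + ξ * z) / (1 - ξ * z)) σ := by
  have h_meas : Measurable fun ξ : ℂ => (1 + ξ * z) / (1 - ξ * z) := by fun_prop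
  refine .of_bound h_meas.aestronglyMeasurable ((1 + ‖z‖) / (1 - ‖z‖)) ?_
  filter_upwards [ae_norm_mul_eq hσ z] with ξ hξ
  have h_num : ‖1 + ξ * z‖ ≤ 1 + ‖z‖ := by
    simpa only [hξ, norm_one] using norm_add_le 1 (ξ * z)
  have h_den : 1 - ‖z‖ ≤ ‖1 - ξ * z‖ := by
    simpa only [hξ, norm_one] using norm_sub_norm_le 1 (ξ * z)
  rw [norm_div]
  exact div_le_div₀ (by positivity) h_num (sub_pos.2 hz) h_den

lemma re_herglotzTransform (hσ : σ (sphere (0 : ℂ) 1)ᶜ = 0) (hz : ‖z‖ < 1) :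
    (herglotzTransform σ z).re = ∫ ξ, ((1 + ξ * z) / (1 - ξ * z)).re ∂σ :=
  (integral_re (integrable_herglotzKernel hσ hz)).symm

lemma im_herglotzTransform (hσ : σ (sphere (0 : ℂ) 1)ᶜ = 0) (hz : ‖z‖ < 1) :
    (herglotzTransform σ z).im = ∫ ξ, ((1 + ξ * z) / (1 - ξ * z)).im ∂σ :=
  (integral_im (integrable_herglotzKernel hσ hz)).symm

lemma re_herglotzTransform_nonneg (hσ : σ (sphere (0 : ℂ) 1)ᶜ = 0) (hz : ‖z‖ < 1) :
    0 ≤ (herglotzTransform σ z).re := by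
  rw [re_herglotzTransform hσ hz]
  refine integral_nonneg_of_ae ?_
  filter_upwards [ae_norm_mul_eq hσ z] with ξ hξ
  exact re_one_add_div_one_sub_nonneg (hξ.trans_le hz.le)

lemma re_herglotzTransform_le (hσ : σ (sphere (0 : ℂ) 1)ᶜ = 0) (hz : ‖z‖ < 1) :
    (herglotzTransform σ z).re ≤ (1 + ‖z‖) / (1 - ‖z‖) * σ.real univ := by
  calc (herglotzTransform σ z).re = ∫ ξ, ((1 + ξ * z) / (1 - ξ * z)).re ∂σ :=
        re_herglotzTransform hσ hz
    _ ≤ ∫ _, (1 + ‖z‖) / (1 - ‖z‖) ∂σ := by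
        refine integral_mono_ae (integrable_herglotzKernel hσ hz).re (integrable_const _) ?_
        filter_upwards [ae_norm_mul_eq hσ z] with ξ hξ
        exact hξ ▸ re_one_add_div_one_sub_le (hξ.trans_lt hz)
    _ = (1 + ‖z‖) / (1 - ‖z‖) * σ.real univ := by
        rw [integral_const, smul_eq_mul, mul_comm]

lemma abs_im_herglotzTransform_le (hσ : σ (sphere (0 : ℂ) 1)ᶜ = 0) (hz : ‖z‖ < 1) :
    |(herglotzTransform σ z).im| ≤
      2 * ‖z‖ / (1 - ‖z‖ ^ 2) * (herglotzTransform σ z).re := by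
  rw [re_herglotzTransform hσ hz, im_herglotzTransform hσ hz, ← integral_const_mul,
    ← Real.norm_eq_abs]
  refine norm_integral_le_of_norm_le ((integrable_herglotzKernel hσ hz).re.const_mul _) ?_
  filter_upwards [ae_norm_mul_eq hσ z] with ξ hξ
  exact hξ ▸ abs_im_one_add_div_one_sub_le (hξ.trans_lt hz)

lemma differentiableOn_herglotzTransform (hσ : σ (sphere (0 : ℂ) 1)ᶜ = 0) :
    DifferentiableOn ℂ (herglotzTransform σ) (ball 0 1) := by
  intro z hz
  rw [mem_ball_zero_iff] at hz
  obtain ⟨r, hzr, hr⟩ := exists_between hz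
  have h_pos : 0 < 1 - r := sub_pos.2 hr
  have h_den : ∀ᵐ ξ ∂σ, ∀ w ∈ ball (0 : ℂ) r, 1 - r ≤ ‖1 - ξ * w‖ := by
    filter_upwards [ae_norm_eq_one hσ] with ξ hξ w hw
    have h_tri := norm_sub_norm_le 1 (ξ * w)
    rw [norm_one, norm_mul, hξ, one_mul] at h_tri
    linarith [mem_ball_zero_iff.1 hw]
  have h_deriv := hasDerivAt_integral_of_dominated_loc_of_deriv_le (μ := σ) (𝕜 := ℂ)
    (F := fun w ξ => (1 + ξ * w) / (1 - ξ * w)) (F' := fun w ξ => 2 * ξ / (1 - ξ * w) ^ 2)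
    (bound := fun _ => 2 / (1 - r) ^ 2) (x₀ := z)
    (isOpen_ball.mem_nhds (mem_ball_zero_iff.2 hzr))
    (.of_forall fun w => Measurable.aestronglyMeasurable (by fun_prop))
    (integrable_herglotzKernel hσ hz) (Measurable.aestronglyMeasurable (by fun_prop))
    ?_ (integrable_const _) ?_
  · exact h_deriv.2.differentiableAt.differentiableWithinAt
  · filter_upwards [h_den, ae_norm_eq_one hσ] with ξ hξ_den hξ w hw
    rw [norm_div, norm_mul, norm_pow, hξ, norm_ofNat, mul_one]
    gcongr
    exact hξ_den w hw
  · filter_upwards [h_den] with ξ hξ_den w hw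
    have h_ne : 1 - ξ * w ≠ 0 := norm_pos_iff.1 (h_pos.trans_le (hξ_den w hw))
    have h_lin : HasDerivAt (fun w => ξ * w) ξ w := by
      simpa using (hasDerivAt_id w).const_mul ξ
    convert! (h_lin.const_add 1).div (h_lin.const_sub 1) h_ne using 1
    ring

end HerglotzTransform

lemma two_mul_div_one_sub_sq_mul_neg_log_le_one {r : ℝ} (h0 : 0 < r) (h1 : r < 1) :
    2 * r / (1 - r ^ 2) * -Real.log r ≤ 1 := by
  have h_sinh : -Real.log r ≤ (r⁻¹ - r) / 2 := by
    have h := Real.self_le_sinh_iff.2 (neg_nonneg.2 (Real.log_nonpos h0.le h1.le))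
    rw [Real.sinh_neg, Real.sinh_log h0] at h
    linarith
  have h_pos : 0 < 1 - r ^ 2 := sub_pos.2 (pow_lt_one₀ h0.le h1 two_ne_zero)
  rw [div_mul_eq_mul_div, div_le_one h_pos]
  calc 2 * r * -Real.log r ≤ 2 * r * ((r⁻¹ - r) / 2) := by gcongr
    _ = 1 - r ^ 2 := by field_simp

lemma hasDerivAt_id_mul_zero {𝕜 : Type*} [NontriviallyNormedField 𝕜] {g : 𝕜 → 𝕜}
    (hg : DifferentiableAt 𝕜 g 0) : HasDerivAt (fun z => z * g z) (g 0) 0 := by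
  simpa using (hasDerivAt_id' (0 : 𝕜)).fun_mul hg.hasDerivAt

section PhiLH

variable {α w : ℂ} {σ : Measure ℂ}

lemma re_herglotzTransform_le_neg_log_norm (hα : ‖α‖ = 1) (hw0 : w ≠ 0)
    (hΦ : ‖PhiLH α σ w‖ ≤ 1) : (herglotzTransform σ w).re ≤ -Real.log ‖w‖ := by
  rw [PhiLH_eq_mul_exp, norm_mul, norm_mul, hα, one_mul, norm_exp] at hΦ
  have h_log := Real.log_nonpos (by positivity) hΦ
  rw [Real.log_mul (norm_ne_zero_iff.2 hw0) (Real.exp_ne_zero _), Real.log_exp] at h_log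
  linarith

variable [IsFiniteMeasure σ]

lemma differentiableOn_PhiLH (α : ℂ) (hσ : σ (sphere (0 : ℂ) 1)ᶜ = 0) :
    DifferentiableOn ℂ (PhiLH α σ) (ball 0 1) := by
  rw [funext (PhiLH_eq_mul_exp α σ)]
  exact differentiableOn_id.mul ((differentiableOn_herglotzTransform hσ).cexp.const_mul α)

lemma deriv_PhiLH_zero (α : ℂ) (hσ : σ (sphere (0 : ℂ) 1)ᶜ = 0) :
    deriv (PhiLH α σ) 0 = α * Real.exp (σ.real univ) := by
  have h_diff : DifferentiableAt ℂ (fun z => α * exp (herglotzTransform σ z)) 0 :=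
    ((differentiableOn_herglotzTransform hσ).differentiableAt
      (ball_mem_nhds 0 one_pos)).cexp.const_mul α
  rw [funext (PhiLH_eq_mul_exp α σ)]
  simpa [herglotzTransform_zero] using (hasDerivAt_id_mul_zero h_diff).deriv

lemma abs_im_herglotzTransform_le_one (hα : ‖α‖ = 1) (hσ : σ (sphere (0 : ℂ) 1)ᶜ = 0)
    (hw : ‖w‖ < 1) (hw0 : w ≠ 0) (hΦ : ‖PhiLH α σ w‖ ≤ 1) :
    |(herglotzTransform σ w).im| ≤ 1 := by
  have h_pos : 0 < 1 - ‖w‖ ^ 2 := sub_pos.2 (pow_lt_one₀ (norm_nonneg w) hw two_ne_zero)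
  calc |(herglotzTransform σ w).im|
      ≤ 2 * ‖w‖ / (1 - ‖w‖ ^ 2) * (herglotzTransform σ w).re := abs_im_herglotzTransform_le hσ hw
    _ ≤ 2 * ‖w‖ / (1 - ‖w‖ ^ 2) * -Real.log ‖w‖ := by
        gcongr
        exact re_herglotzTransform_le_neg_log_norm hα hw0 hΦ
    _ ≤ 1 := two_mul_div_one_sub_sq_mul_neg_log_le_one (norm_pos_iff.2 hw0) hw

lemma re_herglotzTransform_le_three_mul_mass_add_log_two (hα : ‖α‖ = 1)
    (hσ : σ (sphere (0 : ℂ) 1)ᶜ = 0) (hw : ‖w‖ < 1) (hw0 : w ≠ 0) (hΦ : ‖PhiLH α σ w‖ ≤ 1) :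
    (herglotzTransform σ w).re ≤ 3 * σ.real univ + Real.log 2 := by
  have h_mass : 0 ≤ σ.real univ := measureReal_nonneg
  -- Harnack's inequality is effective away from the circle, the bound by `-log |w|` near it.
  rcases le_total ‖w‖ 2⁻¹ with h_small | h_large
  · have h_harnack : (1 + ‖w‖) / (1 - ‖w‖) ≤ 3 := by
      rw [div_le_iff₀ (sub_pos.2 hw)]
      linarith
    calc (herglotzTransform σ w).re ≤ (1 + ‖w‖) / (1 - ‖w‖) * σ.real univ :=
          re_herglotzTransform_le hσ hw
      _ ≤ 3 * σ.real univ := by gcongr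
      _ ≤ 3 * σ.real univ + Real.log 2 := le_add_of_nonneg_right (Real.log_nonneg one_le_two)
  · calc (herglotzTransform σ w).re ≤ -Real.log ‖w‖ :=
          re_herglotzTransform_le_neg_log_norm hα hw0 hΦ
      _ ≤ -Real.log 2⁻¹ := neg_le_neg (Real.log_le_log (by norm_num) h_large)
      _ ≤ 3 * σ.real univ + Real.log 2 := by
          rw [Real.log_inv, neg_neg]
          linarith

lemma div_PhiLH_mem_annularSector (hα : ‖α‖ = 1) (hσ : σ (sphere (0 : ℂ) 1)ᶜ = 0)
    (hw : ‖w‖ < 1) (hw0 : w ≠ 0) (hΦ : ‖PhiLH α σ w‖ ≤ 1) :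
    w / PhiLH α σ w ∈
      annularSector (Real.exp (-(3 * σ.real univ + Real.log 2))) (|α.arg| + 1) := by
  have h_quot : w / PhiLH α σ w = α⁻¹ * exp (-herglotzTransform σ w) := by
    rw [PhiLH_eq_mul_exp, div_mul_cancel_left₀ hw0, mul_inv, exp_neg]
  have h_norm : ‖w / PhiLH α σ w‖ = Real.exp (-(herglotzTransform σ w).re) := by
    rw [h_quot, norm_mul, norm_inv, hα, inv_one, one_mul, norm_exp, neg_re]
  refine ⟨?_, ?_, ?_⟩
  · rw [h_norm]
    gcongr
    exact re_herglotzTransform_le_three_mul_mass_add_log_two hα hσ hw hw0 hΦ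
  · rw [h_norm, Real.exp_le_one_iff, neg_nonpos]
    exact re_herglotzTransform_nonneg hσ hw
  · calc |(w / PhiLH α σ w).arg| ≤ |α⁻¹.arg| + |(exp (-herglotzTransform σ w)).arg| :=
          h_quot ▸ abs_arg_mul_le _ _
      _ ≤ |α.arg| + |(-herglotzTransform σ w).im| :=
          add_le_add (abs_arg_inv α).le (abs_arg_exp_le _)
      _ ≤ |α.arg| + 1 := by
          rw [neg_im, abs_neg]
          gcongr
          exact abs_im_herglotzTransform_le_one hα hσ hw hw0 hΦ

lemma div_mem_annularSector_of_PhiLH_apply_eq (hα : ‖α‖ = 1)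
    (hσ : σ (sphere (0 : ℂ) 1)ᶜ = 0) {ω : ℂ → ℂ}
    (hωc : ContinuousOn ω (closedBall 0 1)) (hωmaps : MapsTo ω (ball 0 1) (ball 0 1))
    (hinv : ∀ z ∈ ball (0 : ℂ) 1, PhiLH α σ (ω z) = z) {z : ℂ} (hz : z ∈ closedBall 0 1)
    (hz0 : z ≠ 0) :
    ω z / z ∈ annularSector (Real.exp (-(3 * σ.real univ + Real.log 2))) (|α.arg| + 1) := by
  have h_closure : closure (ball (0 : ℂ) 1) = closedBall 0 1 := closure_ball 0 one_ne_zero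
  refine mapsTo_closure_inter_of_continuousOn (f := fun z => ω z / z) (U := ball 0 1)
    isOpen_compl_singleton (isClosed_annularSector (Real.exp_pos _) _) ?_ ?_
    ⟨h_closure ▸ hz, hz0⟩
  · rw [h_closure]
    exact (hωc.mono inter_subset_left).div continuousOn_id fun _ hx => hx.2
  · rintro x ⟨hx, hx0⟩
    have hΦ : PhiLH α σ (ω x) = x := hinv x hx
    have hω0 : ω x ≠ 0 := fun h => hx0 (by simpa [h, PhiLH] using hΦ.symm)
    have h_mem := div_PhiLH_mem_annularSector hα hσ (mem_ball_zero_iff.1 (hωmaps hx)) hω0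
      (hΦ.symm ▸ (mem_ball_zero_iff.1 hx).le)
    rwa [hΦ] at h_mem

end PhiLH

section Convergence

open Topology

variable {ι : Type*} {l : Filter ι} {α : ι → ℂ} {c : ℝ}

lemma tendsto_log_of_tendsto_mul_exp {x : ι → ℝ} (hα : ∀ n, ‖α n‖ = 1) (hc : 0 < c)
    (h : Tendsto (fun n => α n * Real.exp (x n)) l (𝓝 c)) : Tendsto x l (𝓝 (Real.log c)) := by
  have h_norm : Tendsto (fun n => Real.exp (x n)) l (𝓝 c) := by
    simpa [hα, abs_of_pos hc, norm_exp] using h.norm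
  simpa using h_norm.log hc.ne'

lemma tendsto_arg_of_tendsto_mul_exp {x : ι → ℝ} (hc : 0 < c)
    (h : Tendsto (fun n => α n * Real.exp (x n)) l (𝓝 c)) :
    Tendsto (fun n => (α n).arg) l (𝓝 0) := by
  have h_arg := (continuousAt_arg (ofReal_mem_slitPlane.2 hc)).tendsto.comp h
  rw [arg_ofReal_of_nonneg hc.le] at h_arg
  exact h_arg.congr fun n => arg_mul_real (Real.exp_pos (x n)) (α n)

lemma tendsto_mul_exp_mass {σ : ι → Measure ℂ} [∀ n, IsFiniteMeasure (σ n)]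
    (hσ : ∀ n, σ n (sphere (0 : ℂ) 1)ᶜ = 0) {Φ : ℂ → ℂ}
    (hconv : TendstoLocallyUniformlyOn (fun n => PhiLH (α n) (σ n)) Φ l (ball 0 1))
    (hΦ : HasDerivAt Φ c 0) :
    Tendsto (fun n => α n * Real.exp ((σ n).real univ)) l (𝓝 c) := by
  have h_deriv := (hconv.deriv (.of_forall fun n => differentiableOn_PhiLH (α n) (hσ n))
    isOpen_ball).tendsto_at (mem_ball_self one_pos)
  rw [hΦ.deriv] at h_deriv
  exact h_deriv.congr fun n => deriv_PhiLH_zero (α n) (hσ n)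

end Convergence

lemma hasDerivAt_mul_exp_zero (t : ℝ) :
    HasDerivAt (fun z : ℂ => z * exp (t * (1 + z) / (2 - 2 * z))) (Real.exp (t / 2) : ℝ) 0 := by
  have h_diff : DifferentiableAt ℂ (fun z : ℂ => exp (t * (1 + z) / (2 - 2 * z))) 0 := by
    fun_prop (disch := norm_num)
  simpa using hasDerivAt_id_mul_zero h_diff

theorem omega_quotient_in_sector_general {ι : Type*} {l : Filter ι} {α : ι → ℂ}
    (hα : ∀ n, ‖α n‖ = 1) {σ : ι → Measure ℂ} [∀ n, IsFiniteMeasure (σ n)]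
    (hσ : ∀ n, σ n (sphere (0 : ℂ) 1)ᶜ = 0) {ω : ι → ℂ → ℂ}
    (hωc : ∀ n, ContinuousOn (ω n) (closedBall 0 1))
    (hωmaps : ∀ n, MapsTo (ω n) (ball 0 1) (ball 0 1))
    (hinv : ∀ n, ∀ z ∈ ball (0 : ℂ) 1, PhiLH (α n) (σ n) (ω n z) = z) {Φ : ℂ → ℂ}
    (hconv : TendstoLocallyUniformlyOn (fun n => PhiLH (α n) (σ n)) Φ l (ball 0 1))
    {c : ℝ} (hc : 0 < c) (hΦ : HasDerivAt Φ c 0) {θ : ℝ} (hθ : 1 < θ) :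
    ∃ C ∈ Ioo (0 : ℝ) 1, ∀ᶠ n in l, ∀ z ∈ closedBall (0 : ℂ) 1, z ≠ 0 →
      ω n z / z ∈ annularSector C θ := by
  have h_lim := tendsto_mul_exp_mass hσ hconv hΦ
  have h_mass : ∀ᶠ n in l, (σ n).real univ ≤ |Real.log c| + 1 :=
    (tendsto_log_of_tendsto_mul_exp hα hc h_lim).eventually_le_const
      ((le_abs_self _).trans_lt (lt_add_one _))
  have h_arg : ∀ᶠ n in l, |(α n).arg| ≤ θ - 1 :=
    (tendsto_arg_of_tendsto_mul_exp hc h_lim).abs.eventually_le_const (by simpa using hθ)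
  refine ⟨Real.exp (-(3 * (|Real.log c| + 1) + Real.log 2)), ⟨Real.exp_pos _, ?_⟩, ?_⟩
  · rw [Real.exp_lt_one_iff, neg_lt_zero]
    positivity
  · filter_upwards [h_mass, h_arg] with n hn_mass hn_arg z hz hz0
    refine annularSector_subset_annularSector ?_ (le_sub_iff_add_le.1 hn_arg)
      (div_mem_annularSector_of_PhiLH_apply_eq (hα n) (hσ n) (hωc n) (hωmaps n) (hinv n) hz hz0)
    gcongr

/-- Lemma 4.6: let `Φ_t(z) = z exp(t(1+z)/(2−2z))` and let `Φ_n` be free Lévy–Hinčin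
forms with `|α_n| = 1` and finite measures `σ_n` on the unit circle, with global
inverses `ω_n : 𝔻̄ → 𝔻̄`. If `Φ_n → Φ_t` uniformly on compact subsets of `𝔻`, then
there are `N` and `C ∈ (0,1)` such that for all `n ≥ N` and nonzero `z ∈ 𝔻̄`, the
quotient `w = ω_n(z)/z` satisfies `C ≤ |w| ≤ 1` and `|arg w| ≤ 2`; in particular
`w` avoids the interval `(−∞,0]`. -/
theorem omega_quotient_in_sector (t : ℝ) (ht : 0 < t)
    (α : ℕ → ℂ) (hα : ∀ n, ‖α n‖ = 1)
    (σ : ℕ → Measure ℂ) [∀ n, IsFiniteMeasure (σ n)]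
    (hsupp : ∀ n, (σ n) (sphere (0 : ℂ) 1)ᶜ = 0)
    (ω : ℕ → ℂ → ℂ)
    (hωc : ∀ n, ContinuousOn (ω n) (closedBall 0 1))
    (hωinj : ∀ n, Set.InjOn (ω n) (closedBall 0 1))
    (hωmapsc : ∀ n, Set.MapsTo (ω n) (closedBall 0 1) (closedBall 0 1))
    (hωmaps : ∀ n, Set.MapsTo (ω n) (ball 0 1) (ball 0 1))
    (hωan : ∀ n, AnalyticOnNhd ℂ (ω n) (ball 0 1))
    (hinv : ∀ n, ∀ z ∈ ball (0 : ℂ) 1, PhiLH (α n) (σ n) (ω n z) = z)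
    (hconv : ∀ K : Set ℂ, K ⊆ ball (0 : ℂ) 1 → IsCompact K →
      TendstoUniformlyOn (fun n z => PhiLH (α n) (σ n) z)
        (fun z => z * Complex.exp (t * (1 + z) / (2 - 2 * z))) atTop K) :
    ∃ N : ℕ, ∃ C : ℝ, C ∈ Set.Ioo (0 : ℝ) 1 ∧
      ∀ n ≥ N, ∀ z ∈ closedBall (0 : ℂ) 1, z ≠ 0 →
        C ≤ ‖ω n z / z‖ ∧ ‖ω n z / z‖ ≤ 1 ∧ |(ω n z / z).arg| ≤ 2 := by
  obtain ⟨C, hC, hmem⟩ := omega_quotient_in_sector_general hα hsupp hωc hωmaps hinv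
    ((tendstoLocallyUniformlyOn_iff_forall_isCompact isOpen_ball).2 hconv)
    (Real.exp_pos (t / 2)) (hasDerivAt_mul_exp_zero t) one_lt_two
  obtain ⟨N, hN⟩ := eventually_atTop.1 hmem
  exact ⟨N, C, hC, hN⟩
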